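/- Suppose λ_0, …, λ_{ns−1} are pairwise distinct and satisfy the local constraints. Then for any c ≥ 1 pairwise distinct indices a_0, …, a_{c−1} ∈ {0,…,n/(s+1)−1} and any nonempty subsets B_0, …, B_{c−1} ⊆ {0,…,s} with |B_0| + |B_1| + … + |B_{c−1}| = t ≤ r, the ℓt × ℓt matrix [A_{a_0,B_0}^(t) | A_{a_1,B_1}^(t) | … | A_{a_{c−1},B_{c−1}}^(t)] has nonzero determinant. -/

import Mathlib

open Matrix

/-- The `u`-th digit of `i` in base `s`. -/
def digit (s i u : ℕ) : ℕ := i / s ^ u % s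

open scoped Classical in
/-- The `z`-th entry of the `(i,j)` block (a length-`t` column vector, `0 ≤ z < t`) of the
block matrix `A_{a,b}^{(t)}`; the group size is `g` (`g = s` for the first construction and
`g = s + 1` for the second), so the relevant `λ`-index is `a·s·g + b·s + j_a`. -/
noncomputable def Aent {F : Type*} [Field F] (lam : ℕ → F) (s g a b i j z : ℕ) : F :=
  if i = j then lam (a * s * g + b * s + digit s j a) ^ z
  else if digit s i a = b ∧ digit s j a ≠ b ∧ (∀ u, u ≠ a → digit s i u = digit s j u) then
    -(lam (a * s * g + b * s + digit s j a) ^ z)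
  else 0

/-- `A_{a,b}^{(t)}` as an `ℓt × ℓ` matrix; row `ρ` encodes block row `ρ / t` and
inner row `ρ % t`. -/
noncomputable def Amat {F : Type*} [Field F] (lam : ℕ → F) (s g ℓ a b t : ℕ) :
    Matrix (Fin (ℓ * t)) (Fin ℓ) F :=
  Matrix.of fun ρ j => Aent lam s g a b ((ρ : ℕ) / t) (j : ℕ) ((ρ : ℕ) % t)

/-- The `m`-th smallest element of the finite set `B ⊆ ℕ` (junk value `0` if `m ≥ |B|`). -/
def enum (B : Finset ℕ) (m : ℕ) : ℕ := (B.sort (· ≤ ·)).getD m 0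

/-- `A_{a,B}^{(t)} = [A_{a,b₁}^{(t)} | ⋯ | A_{a,b_v}^{(t)}]` as an `ℓt × ℓ|B|` matrix:
row `ρ` encodes block row `ρ / t` and inner row `ρ % t`; column `κ` selects the
`κ / ℓ`-th member of `B` and inner column `κ % ℓ`. -/
noncomputable def AmatB {F : Type*} [Field F] (lam : ℕ → F) (s g ℓ a t : ℕ) (B : Finset ℕ) :
    Matrix (Fin (ℓ * t)) (Fin (ℓ * B.card)) F :=
  Matrix.of fun ρ κ =>
    Aent lam s g a (enum B ((κ : ℕ) / ℓ)) ((ρ : ℕ) / t) ((κ : ℕ) % ℓ) ((ρ : ℕ) % t)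

/-- The local (in-group) constraints: every square matrix `A_{a,B}` (for a group index
`a < groups` and a nonempty `B ⊆ {0, …, g-1}`) is invertible. -/
def LocalConstraints {F : Type*} [Field F] (lam : ℕ → F) (s g ℓ groups : ℕ) : Prop :=
  ∀ a < groups, ∀ B ⊆ Finset.range g, B.Nonempty → (AmatB lam s g ℓ a B.card B).det ≠ 0

/-- Locate position `κ` within `c` consecutive blocks of sizes `sz 0, sz 1, …`:
returns the block index and the offset within that block. -/
def loc : ℕ → (ℕ → ℕ) → ℕ → ℕ × ℕ
  | 0, _, κ => (0, κ)
  | c + 1, sz, κ =>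
      if κ < sz 0 then (0, κ)
      else
        let p := loc c (fun i => sz (i + 1)) (κ - sz 0)
        (p.1 + 1, p.2)

/-- The horizontal concatenation `[A_{a₀,B₀}^{(t)} | A_{a₁,B₁}^{(t)} | ⋯ | A_{a_{c−1},B_{c−1}}^{(t)}]`
as an `ℓt × ℓt` square matrix (where `t = |B₀| + ⋯ + |B_{c−1}|`). -/
noncomputable def MultiCat {F : Type*} [Field F] (lam : ℕ → F) (s g ℓ t c : ℕ)
    (a : ℕ → ℕ) (B : ℕ → Finset ℕ) : Matrix (Fin (ℓ * t)) (Fin (ℓ * t)) F :=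
  Matrix.of fun ρ κ =>
    let p := loc c (fun m => ℓ * (B m).card) (κ : ℕ)
    Aent lam s g (a p.1) (enum (B p.1) (p.2 / ℓ)) ((ρ : ℕ) / t) (p.2 % ℓ) ((ρ : ℕ) % t)


section Core
open Polynomial

variable {F : Type*} [Field F] {N s : ℕ}

/-- The linear condition attached to a column. -/
noncomputable def cnd (μ : Fin N → ℕ → Fin s → F) (a : Fin N) (b : ℕ) (j : Fin N → Fin s)
    (f : (Fin N → Fin s) → F[X]) : F :=
  (f j).eval (μ a b (j a)) -
    if h : b < s then
      if (j a : ℕ) = b then 0 else (f (Function.update j a ⟨b, h⟩)).eval (μ a b (j a))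
    else 0

theorem cnd_add (μ : Fin N → ℕ → Fin s → F) (a : Fin N) (b : ℕ) (j : Fin N → Fin s)
    (f g : (Fin N → Fin s) → F[X]) :
    cnd μ a b j (fun i => f i + g i) = cnd μ a b j f + cnd μ a b j g := by
  unfold cnd
  split_ifs <;> simp <;> ring

theorem cnd_sub (μ : Fin N → ℕ → Fin s → F) (a : Fin N) (b : ℕ) (j : Fin N → Fin s)
    (f g : (Fin N → Fin s) → F[X]) :
    cnd μ a b j (fun i => f i - g i) = cnd μ a b j f - cnd μ a b j g := by
  unfold cnd
  split_ifs <;> simp <;> ring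

theorem cnd_mul (μ : Fin N → ℕ → Fin s → F) (a : Fin N) (b : ℕ) (j : Fin N → Fin s)
    (h : F[X]) (f : (Fin N → Fin s) → F[X]) :
    cnd μ a b j (fun i => h * f i) = h.eval (μ a b (j a)) * cnd μ a b j f := by
  unfold cnd
  split_ifs <;> simp <;> ring

theorem cnd_sum {ι : Type*} (μ : Fin N → ℕ → Fin s → F) (a : Fin N) (b : ℕ)
    (j : Fin N → Fin s) (S : Finset ι) (f : ι → (Fin N → Fin s) → F[X]) :
    cnd μ a b j (fun i => ∑ x ∈ S, f x i) = ∑ x ∈ S, cnd μ a b j (f x) := by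
  unfold cnd
  split_ifs <;> simp [eval_finsetSum]

/-- Local solvability. -/
def LocSurj (μ : Fin N → ℕ → Fin s → F) (a : Fin N) (B : Finset ℕ) : Prop :=
  ∀ g : ℕ → (Fin N → Fin s) → F, ∃ f : (Fin N → Fin s) → F[X],
    (∀ j m, B.card ≤ m → (f j).coeff m = 0) ∧ ∀ b ∈ B, ∀ j, cnd μ a b j f = g b j

theorem exists_P (μ : Fin N → ℕ → Fin s → F) (a : Fin N) (B : Finset ℕ)
    (h : LocSurj μ a B) (y : Fin s) :
    ∃ P : Fin s → F[X], (∀ z, (P z).natDegree ≤ B.card) ∧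
      (∀ z, (P z).coeff B.card = if z = y then 1 else 0) ∧
      ∀ b ∈ B, ∀ z, (P z).eval (μ a b z) -
        (if h : b < s then if (z : ℕ) = b then 0 else (P ⟨b, h⟩).eval (μ a b z) else 0) = 0 := by
  classical
  let j0 : Fin N → Fin s := fun _ => y
  let e : (Fin N → Fin s) → F[X] := fun j => if j = j0 then X ^ B.card else 0
  obtain ⟨f, hf1, hf2⟩ := h (fun b j => - cnd μ a b j e)
  refine ⟨fun z => f (Function.update j0 a z) + e (Function.update j0 a z), ?_, ?_, ?_⟩
  · intro z
    refine (natDegree_le_iff_coeff_eq_zero).2 fun m hm => ?_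
    rw [coeff_add, hf1 _ _ hm.le]
    by_cases hz : Function.update j0 a z = j0
    · simp [e, hz, coeff_X_pow, hm.ne']
    · simp [e, hz]
  · intro z
    have : Function.update j0 a z = j0 ↔ z = y := by
      constructor
      · intro h
        have := congrFun h a
        simpa [j0] using this
      · rintro rfl
        exact Function.update_eq_self_iff.2 rfl
    simp only [coeff_add, hf1 _ _ le_rfl, e, this]
    split_ifs <;> simp
  · intro b hb z
    have h1 := cnd_add μ a b (Function.update j0 a z) f e
    rw [hf2 b hb, neg_add_cancel] at h1
    refine Eq.trans ?_ h1
    simp only [cnd, Function.update_self, Function.update_idem]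

/-- The operator acting on digit `a`. -/
noncomputable def opR (a : Fin N) (P : Fin s → Fin s → F[X]) (f : (Fin N → Fin s) → F[X]) :
    (Fin N → Fin s) → F[X] :=
  fun j => ∑ y, f (Function.update j a y) * P y (j a)

theorem exists_monic (μ : Fin N → ℕ → Fin s → F) (B : Fin N → Finset ℕ)
    (S : Finset (Fin N)) (h : ∀ a ∈ S, LocSurj μ a (B a)) (i : Fin N → Fin s) :
    ∃ r : (Fin N → Fin s) → F[X], (∀ j, (r j).natDegree ≤ ∑ a ∈ S, (B a).card) ∧
      (∀ j, (r j).coeff (∑ a ∈ S, (B a).card) = if j = i then 1 else 0) ∧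
      ∀ a ∈ S, ∀ b ∈ B a, ∀ j, cnd μ a b j r = 0 := by
  classical
  induction S using Finset.induction_on with
  | empty =>
    refine ⟨fun j => if j = i then 1 else 0, ?_, ?_, ?_⟩
    · intro j; by_cases hj : j = i <;> simp [hj]
    · intro j; by_cases hj : j = i <;> simp [hj]
    · simp
  | insert a S ha ih =>
    obtain ⟨r, hr1, hr2, hr3⟩ := ih (fun a' ha' => h a' (Finset.mem_insert_of_mem ha'))
    choose P hP1 hP2 hP3 using exists_P μ a (B a) (h a (Finset.mem_insert_self _ _))
    refine ⟨opR a P r, ?_, ?_, ?_⟩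
    · intro j
      rw [Finset.sum_insert ha, add_comm]
      refine natDegree_sum_le_of_forall_le _ _ fun y _ => ?_
      exact natDegree_mul_le_of_le (hr1 _) (hP1 _ _)
    · intro j
      rw [Finset.sum_insert ha, add_comm]
      simp only [opR, finsetSum_coeff]
      rw [Finset.sum_congr rfl fun y _ => coeff_mul_add_eq_of_natDegree_le (hr1 _) (hP1 _ _)]
      simp only [hr2, hP2]
      rw [Finset.sum_eq_single (j a)]
      · simp
      · intro y _ hy
        simp [Ne.symm hy]
      · simp
    · intro a' ha' b hb j
      rcases Finset.mem_insert.1 ha' with rfl | ha'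
      · have key : cnd μ a' b j (opR a' P r) =
            ∑ y, (r (Function.update j a' y)).eval (μ a' b (j a')) *
              ((P y (j a')).eval (μ a' b (j a')) -
        (if h : b < s then if (j a' : ℕ) = b then 0 else
          (P y ⟨b, h⟩).eval (μ a' b (j a')) else 0)) := by
          unfold cnd opR
          split_ifs <;> simp [eval_finsetSum, mul_sub]
        rw [key]
        exact Finset.sum_eq_zero fun y _ => by rw [hP3 y b hb, mul_zero]
      · have hne : a' ≠ a := fun h => ha (h ▸ ha')
        have key : cnd μ a' b j (opR a P r) =
            ∑ y, cnd μ a' b (Function.update j a y) r * (P y (j a)).eval (μ a' b (j a')) := by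
          unfold cnd opR
          split_ifs <;>
            simp_all [eval_finsetSum, sub_mul, Function.update_of_ne, hne.symm,
              Function.update_comm hne]
        rw [key]
        exact Finset.sum_eq_zero fun y _ => by rw [hr3 a' ha' b hb, zero_mul]

theorem reduce_deg (μ : Fin N → ℕ → Fin s → F) (B : Fin N → Finset ℕ)
    (S : Finset (Fin N)) (h : ∀ a ∈ S, LocSurj μ a (B a)) (D : ℕ) :
    ∀ f : (Fin N → Fin s) → F[X],
      (∀ j m, (∑ a ∈ S, (B a).card) + D ≤ m → (f j).coeff m = 0) →
      ∃ f' : (Fin N → Fin s) → F[X],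
        (∀ j m, (∑ a ∈ S, (B a).card) ≤ m → (f' j).coeff m = 0) ∧
        ∀ a ∈ S, ∀ b ∈ B a, ∀ j, cnd μ a b j f' = cnd μ a b j f := by
  classical
  choose r hr1 hr2 hr3 using exists_monic μ B S h
  induction D with
  | zero => exact fun f hf => ⟨f, hf, fun _ _ _ _ _ => rfl⟩
  | succ D ih =>
    intro f hf
    set t := ∑ a ∈ S, (B a).card with ht
    have hred : ∀ j m, t + D ≤ m →
        (f j - ∑ i, (C ((f i).coeff (t + D)) * X ^ D) * r i j).coeff m = 0 := by
      intro j m hm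
      simp only [coeff_sub, finsetSum_coeff, mul_assoc, coeff_C_mul, coeff_X_pow_mul']
      have hDm : D ≤ m := by omega
      simp only [hDm, if_true]
      rcases hm.eq_or_lt with rfl | hlt
      · simp [hr2]
      · rw [hf j m (by omega), Finset.sum_eq_zero, sub_zero]
        intro i _
        have h0 : (r i j).coeff (m - D) = 0 :=
          coeff_eq_zero_of_natDegree_lt ((hr1 i j).trans_lt (by omega))
        rw [h0, mul_zero]
    obtain ⟨f', h1, h2⟩ := ih _ hred
    refine ⟨f', h1, fun a ha b hb j => ?_⟩
    rw [h2 a ha b hb, cnd_sub μ a b j f, cnd_sum, Finset.sum_eq_zero, sub_zero]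
    intro i _
    rw [cnd_mul, hr3 i a ha b hb, mul_zero]

theorem core (μ : Fin N → ℕ → Fin s → F) (B : Fin N → Finset ℕ)
    (S : Finset (Fin N)) (h : ∀ a ∈ S, LocSurj μ a (B a))
    (H : Fin N → F[X])
    (hH1 : ∀ a ∈ S, ∀ b ∈ B a, ∀ y, (H a).eval (μ a b y) = 1)
    (hH0 : ∀ a ∈ S, ∀ a' , a' ≠ a → ∀ b ∈ B a, ∀ y, (H a').eval (μ a b y) = 0)
    (g : Fin N → ℕ → (Fin N → Fin s) → F) :
    ∃ f : (Fin N → Fin s) → F[X],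
      (∀ j m, (∑ a ∈ S, (B a).card) ≤ m → (f j).coeff m = 0) ∧
      ∀ a ∈ S, ∀ b ∈ B a, ∀ j, cnd μ a b j f = g a b j := by
  classical
  have : ∀ a, ∃ f : (Fin N → Fin s) → F[X],
      a ∈ S → ∀ b ∈ B a, ∀ j, cnd μ a b j f = g a b j := by
    intro a
    by_cases ha : a ∈ S
    · obtain ⟨f, _, hf⟩ := h a ha (g a)
      exact ⟨f, fun _ => hf⟩
    · exact ⟨0, fun h => absurd h ha⟩
  choose f hf using this
  let f0 : (Fin N → Fin s) → F[X] := fun j => ∑ a ∈ S, H a * f a j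
  obtain ⟨f', h1, h2⟩ := reduce_deg μ B S h (∑ j, ((f0 j).natDegree + 1)) f0 (by
    intro j m hm
    apply coeff_eq_zero_of_natDegree_lt
    have := Finset.single_le_sum (f := fun j => (f0 j).natDegree + 1)
      (fun _ _ => Nat.zero_le _) (Finset.mem_univ j)
    omega)
  refine ⟨f', h1, fun a ha b hb j => ?_⟩
  rw [h2 a ha b hb j, cnd_sum, Finset.sum_eq_single a]
  · rw [cnd_mul, hH1 a ha b hb, one_mul, hf a ha b hb]
  · intro a' _ hne
    rw [cnd_mul, hH0 a ha a' hne b hb, zero_mul]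
  · exact fun h => absurd ha h

end Core

section Conv
open Polynomial

variable {F : Type*} [Field F] {N s : ℕ}

theorem digit_equiv (j : Fin N → Fin s) (u : Fin N) :
    digit s (finFunctionFinEquiv j : Fin (s ^ N)) u = j u := by
  conv_rhs => rw [← finFunctionFinEquiv.symm_apply_apply j]
  rfl

theorem digit_equiv_ge (j : Fin N → Fin s) (u : ℕ) (hu : N ≤ u) :
    digit s (finFunctionFinEquiv j : Fin (s ^ N)) u = 0 := by
  unfold digit
  rcases Nat.eq_zero_or_pos s with rfl | hs
  · rcases Nat.eq_zero_or_pos N with rfl | hN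
    · simp
    · exact (j ⟨0, hN⟩).elim0
  · rw [Nat.div_eq_of_lt, Nat.zero_mod]
    exact (finFunctionFinEquiv j).2.trans_le (Nat.pow_le_pow_right hs hu)

/-- The evaluation points. -/
def muOf (lam : ℕ → F) (s : ℕ) {N : ℕ} (a : Fin N) (b : ℕ) (y : Fin s) : F :=
  lam (a * s * (s + 1) + b * s + y)

theorem Aent_eq (lam : ℕ → F) (a : Fin N) (b : ℕ) (i j : Fin N → Fin s) (z : ℕ) :
    Aent lam s (s + 1) a b (finFunctionFinEquiv i : Fin (s ^ N))
      (finFunctionFinEquiv j : Fin (s ^ N)) z =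
    ((if i = j then 1 else 0) - (if h : b < s then if (j a : ℕ) = b then 0 else
      if i = Function.update j a ⟨b, h⟩ then 1 else 0 else 0)) * muOf lam s a b (j a) ^ z := by
  have hcond : (digit s (finFunctionFinEquiv i : Fin (s ^ N)) a = b ∧
      digit s (finFunctionFinEquiv j : Fin (s ^ N)) a ≠ b ∧
      (∀ u, u ≠ (a : ℕ) → digit s (finFunctionFinEquiv i : Fin (s ^ N)) u =
        digit s (finFunctionFinEquiv j : Fin (s ^ N)) u)) ↔
      ((j a : ℕ) ≠ b ∧ ∃ h : b < s, i = Function.update j a ⟨b, h⟩) := by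
    rw [digit_equiv, digit_equiv]
    constructor
    · rintro ⟨h1, h2, h3⟩
      refine ⟨h2, h1 ▸ (i a).2, ?_⟩
      funext u
      by_cases hu : u = a
      · subst hu
        simp [← h1]
      · rw [Function.update_of_ne hu]
        have := h3 u (fun h => hu (Fin.ext h))
        rw [digit_equiv, digit_equiv] at this
        exact Fin.ext this
    · rintro ⟨h2, h, rfl⟩
      refine ⟨by simp, h2, fun u hu => ?_⟩
      by_cases huN : u < N
      · have h1 := digit_equiv (Function.update j a ⟨b, h⟩) ⟨u, huN⟩
        have h2 := digit_equiv j ⟨u, huN⟩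
        rw [Function.update_of_ne (fun h => hu (congrArg Fin.val h))] at h1
        exact h1.trans h2.symm
      · rw [digit_equiv_ge _ _ (not_lt.1 huN), digit_equiv_ge _ _ (not_lt.1 huN)]
  have hij : ((finFunctionFinEquiv i : Fin (s ^ N)) : ℕ) = (finFunctionFinEquiv j : Fin (s ^ N))
      ↔ i = j := by
    rw [← Fin.ext_iff]
    exact finFunctionFinEquiv.injective.eq_iff
  unfold Aent
  simp only [hcond, hij]
  simp only [digit_equiv, muOf]
  by_cases h1 : i = j
  · subst h1
    by_cases hb : b < s
    · by_cases hi : (i a : ℕ) = b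
      · simp [hi]
      · have : i ≠ Function.update i a ⟨b, hb⟩ := fun h => hi (by
          have := congrFun h a
          simp at this
          exact congrArg Fin.val this)
        simp [hi, this]
    · simp [hb]
  · by_cases hb : b < s
    · by_cases hi : (j a : ℕ) = b
      · simp [hi, h1]
      · by_cases hu : i = Function.update j a ⟨b, hb⟩
        · rw [if_neg h1, if_pos ⟨hi, hb, hu⟩]
          rw [if_neg h1, dif_pos hb, if_neg hi, if_pos hu]
          ring
        · simp [hi, h1, hu, hb]
    · simp [hb, h1]

theorem sum_Aent (lam : ℕ → F) (t : ℕ) (f : (Fin N → Fin s) → F[X])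
    (hf : ∀ j m, t ≤ m → (f j).coeff m = 0) (a : Fin N) (b : ℕ) (j : Fin N → Fin s) :
    ∑ ρ : Fin (s ^ N * t), (f (finFunctionFinEquiv.symm ρ.divNat)).coeff ((ρ : ℕ) % t) *
      Aent lam s (s + 1) a b ((ρ : ℕ) / t) (finFunctionFinEquiv j : Fin (s ^ N)) ((ρ : ℕ) % t)
    = cnd (muOf lam s) a b j f := by
  rw [← finProdFinEquiv.sum_comp, Fintype.sum_prod_type, ← finFunctionFinEquiv.sum_comp]
  have key : ∀ i : Fin N → Fin s, ∀ z : Fin t,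
      (f (finFunctionFinEquiv.symm (finProdFinEquiv (finFunctionFinEquiv i, z)).divNat)).coeff
        (((finProdFinEquiv (finFunctionFinEquiv i, z) : Fin (s ^ N * t)) : ℕ) % t) *
      Aent lam s (s + 1) a b
        (((finProdFinEquiv (finFunctionFinEquiv i, z) : Fin (s ^ N * t)) : ℕ) / t)
        (finFunctionFinEquiv j : Fin (s ^ N))
        (((finProdFinEquiv (finFunctionFinEquiv i, z) : Fin (s ^ N * t)) : ℕ) % t) =
      ((if i = j then 1 else 0) - (if h : b < s then if (j a : ℕ) = b then 0 else
      if i = Function.update j a ⟨b, h⟩ then 1 else 0 else 0)) *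
        ((f i).coeff z * muOf lam s a b (j a) ^ (z : ℕ)) := by
    intro i z
    have hinv := finProdFinEquiv.symm_apply_apply (finFunctionFinEquiv i, z)
    have h1 : (finProdFinEquiv (finFunctionFinEquiv i, z)).divNat = finFunctionFinEquiv i :=
      congrArg Prod.fst hinv
    have h2 : (finProdFinEquiv (finFunctionFinEquiv i, z)).modNat = z :=
      congrArg Prod.snd hinv
    have h1' : ((finProdFinEquiv (finFunctionFinEquiv i, z) : Fin (s ^ N * t)) : ℕ) / t =
      (finFunctionFinEquiv i : Fin (s ^ N)) := congrArg Fin.val h1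
    have h2' : ((finProdFinEquiv (finFunctionFinEquiv i, z) : Fin (s ^ N * t)) : ℕ) % t = z :=
      congrArg Fin.val h2
    rw [h1, h1', h2', Equiv.symm_apply_apply, Aent_eq]
    ring
  simp only [key, ← Finset.mul_sum]
  have hev : ∀ i x, ∑ z : Fin t, (f i).coeff z * x ^ (z : ℕ) = (f i).eval x := by
    intro i x
    rw [Finset.sum_range (fun z => (f i).coeff z * x ^ z) |>.symm]
    rcases Nat.eq_zero_or_pos t with rfl | ht
    · have : f i = 0 := by ext m; simpa using hf i m (Nat.zero_le _)
      simp [this]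
    · refine (eval_eq_sum_range' ?_ x).symm
      by_contra hcon
      have h0 := hf i _ (not_lt.1 hcon)
      rw [coeff_natDegree, leadingCoeff_eq_zero] at h0
      rw [h0] at hcon
      simp at hcon
      omega
  simp only [hev, sub_mul, Finset.sum_sub_distrib]
  unfold cnd
  congr 1
  · simp
  · split_ifs <;> simp

theorem exists_poly (t : ℕ) (y : Fin (s ^ N * t) → F) :
    ∃ f : (Fin N → Fin s) → F[X], (∀ j m, t ≤ m → (f j).coeff m = 0) ∧
      ∀ ρ : Fin (s ^ N * t),
        (f (finFunctionFinEquiv.symm ρ.divNat)).coeff ((ρ : ℕ) % t) = y ρ := by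
  refine ⟨fun j => ∑ z : Fin t, monomial z (y (finProdFinEquiv (finFunctionFinEquiv j, z))),
    ?_, ?_⟩
  · intro j m hm
    rw [finsetSum_coeff]
    refine Finset.sum_eq_zero fun z _ => ?_
    rw [coeff_monomial, if_neg]
    have := z.2
    omega
  · intro ρ
    rw [finsetSum_coeff, Finset.sum_eq_single ρ.modNat]
    · rw [coeff_monomial, if_pos (by simp), Equiv.apply_symm_apply]
      congr 1
      exact finProdFinEquiv.apply_symm_apply ρ
    · intro z _ hz
      rw [coeff_monomial, if_neg]
      intro h
      exact hz (Fin.ext h)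
    · simp

theorem exists_enum (B : Finset ℕ) (b : ℕ) (hb : b ∈ B) : ∃ m < B.card, enum B m = b := by
  have : b ∈ B.sort (· ≤ ·) := (Finset.mem_sort _).2 hb
  obtain ⟨m, hm, h⟩ := List.getElem_of_mem this
  refine ⟨m, by simpa using hm, ?_⟩
  unfold enum
  rw [List.getD_eq_getElem _ _ hm, h]

theorem enum_mem (B : Finset ℕ) (m : ℕ) (hm : m < B.card) : enum B m ∈ B := by
  unfold enum
  rw [List.getD_eq_getElem _ _ (by simpa using hm)]
  exact (Finset.mem_sort (· ≤ ·)).1 (List.getElem_mem _)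

theorem enum_inj (B : Finset ℕ) (m m' : ℕ) (hm : m < B.card) (hm' : m' < B.card)
    (h : enum B m = enum B m') : m = m' := by
  unfold enum at h
  rw [List.getD_eq_getElem _ _ (by simpa using hm),
    List.getD_eq_getElem _ _ (by simpa using hm')] at h
  exact (List.Nodup.getElem_inj_iff (Finset.sort_nodup _ _)).1 h

theorem locSurj_of_det (lam : ℕ → F) (a : Fin N) (B : Finset ℕ)
    (h : (AmatB lam s (s + 1) (s ^ N) a B.card B).det ≠ 0) : LocSurj (muOf lam s) a B := by
  intro g
  have hsurj := (Matrix.vecMul_surjective_iff_isUnit (A := AmatB lam s (s + 1) (s ^ N) a B.card B)).2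
    ((Matrix.isUnit_iff_isUnit_det _).2 (isUnit_iff_ne_zero.2 h))
  have hpos : ∀ κ : Fin (s ^ N * B.card), (κ : ℕ) % s ^ N < s ^ N := fun κ =>
    Nat.mod_lt _ (Nat.pos_of_ne_zero fun h0 => by
      have h3 : s ^ N * B.card = 0 := by rw [h0, zero_mul]
      have := κ.2
      omega)
  obtain ⟨y, hy⟩ := hsurj (fun κ => g (enum B ((κ : ℕ) / s ^ N))
    (finFunctionFinEquiv.symm ⟨(κ : ℕ) % s ^ N, hpos κ⟩))
  obtain ⟨f, hf1, hf2⟩ := exists_poly B.card y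
  refine ⟨f, hf1, fun b hb j => ?_⟩
  obtain ⟨m, hm, rfl⟩ := exists_enum B b hb
  have hj := (finFunctionFinEquiv j : Fin (s ^ N)).2
  have hκ : s ^ N * m + (finFunctionFinEquiv j : Fin (s ^ N)) < s ^ N * B.card :=
    calc _ < s ^ N * (m + 1) := by rw [mul_add]; omega
      _ ≤ _ := Nat.mul_le_mul_left _ hm
  have e1 : (s ^ N * m + (finFunctionFinEquiv j : Fin (s ^ N))) / s ^ N = m := by
    rw [Nat.mul_add_div (by omega), Nat.div_eq_of_lt hj, add_zero]
  have e2 : (s ^ N * m + (finFunctionFinEquiv j : Fin (s ^ N))) % s ^ N =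
      (finFunctionFinEquiv j : Fin (s ^ N)) := by
    rw [Nat.mul_add_mod, Nat.mod_eq_of_lt hj]
  have := congrFun hy ⟨_, hκ⟩
  simp only [e1, e2, Fin.eta, Equiv.symm_apply_apply] at this
  rw [← this, ← sum_Aent lam B.card f hf1]
  simp only [Matrix.vecMul, dotProduct, AmatB, Matrix.of_apply, hf2, e1, e2]

theorem loc_spec (c : ℕ) : ∀ (sz : ℕ → ℕ) (κ : ℕ), κ < ∑ m ∈ Finset.range c, sz m →
    (loc c sz κ).1 < c ∧ (loc c sz κ).2 < sz (loc c sz κ).1 ∧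
    κ = ∑ m ∈ Finset.range (loc c sz κ).1, sz m + (loc c sz κ).2 := by
  induction c with
  | zero => intro sz κ h; simp at h
  | succ c ih =>
    intro sz κ h
    rw [Finset.sum_range_succ'] at h
    unfold loc
    split_ifs with h0
    · simpa using h0
    · obtain ⟨h1, h2, h3⟩ := ih (fun i => sz (i + 1)) (κ - sz 0) (by omega)
      refine ⟨by simpa using h1, h2, ?_⟩
      simp only [Finset.sum_range_succ']
      omega

end Conv

/-- Lemma 4 of the paper, second construction, group size `s+1`: if the
`λ_i` are pairwise distinct and satisfy the local constraints, then for any `c ≥ 1` pairwise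
distinct group indices `a_0, …, a_{c−1} ∈ [n/(s+1)]` and nonempty subsets
`B_0, …, B_{c−1} ⊆ [s+1]` with `|B_0| + ⋯ + |B_{c−1}| = t ≤ r = n − k`, the matrix
`[A_{a₀,B₀}^{(t)} | ⋯ | A_{a_{c−1},B_{c−1}}^{(t)}]` has nonzero determinant. -/
theorem statement4 (F : Type*) [Field F] [Fintype F] (n k d s ℓ : ℕ)
    (hk : 1 ≤ k) (hkn : k < n) (hd₁ : k + 1 ≤ d) (hd₂ : d ≤ n - 1)
    (hs : s = d - k + 1) (hdiv : (s + 1) ∣ n) (hℓ : ℓ = s ^ (n / (s + 1)))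
    (lam : ℕ → F)
    (hdist : ∀ i < n * s, ∀ j < n * s, lam i = lam j → i = j)
    (hloc : LocalConstraints lam s (s + 1) ℓ (n / (s + 1)))
    (c t : ℕ) (hc : 1 ≤ c)
    (a : ℕ → ℕ) (ha : ∀ m < c, a m < n / (s + 1))
    (hainj : ∀ m₁ < c, ∀ m₂ < c, a m₁ = a m₂ → m₁ = m₂)
    (B : ℕ → Finset ℕ) (hBsub : ∀ m < c, B m ⊆ Finset.range (s + 1))
    (hBne : ∀ m < c, (B m).Nonempty)
    (hsum : ∑ m ∈ Finset.range c, (B m).card = t)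
    (htr : t ≤ n - k) :
    (MultiCat lam s (s + 1) ℓ t c a B).det ≠ 0 := by
  have hs1 : 1 ≤ s := by omega
  obtain ⟨N, hN⟩ := hdiv
  have hNN : n / (s + 1) = N := by rw [hN]; exact Nat.mul_div_cancel_left _ (Nat.succ_pos _)
  rw [hNN] at hℓ hloc ha
  subst hℓ
  classical
  -- group data indexed by `Fin c`
  let σ : Fin c → Fin N := fun m => ⟨a m, ha m m.2⟩
  have hσ : Function.Injective σ := fun m m' h =>
    Fin.ext (hainj m m.2 m' m'.2 (congrArg Fin.val h))
  let B' : Fin N → Finset ℕ := Function.extend σ (fun m : Fin c => B m) (fun _ => ∅)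
  have hB' : ∀ m, B' (σ m) = B m := fun m => hσ.extend_apply _ _ m
  let S : Finset (Fin N) := Finset.univ.image σ
  have hS : ∑ x ∈ S, (B' x).card = t := by
    rw [Finset.sum_image (fun _ _ _ _ h => hσ h), ← hsum, Finset.sum_range]
    simp only [hB']
  have hlocS : ∀ x ∈ S, LocSurj (muOf lam s) x (B' x) := by
    intro x hx
    obtain ⟨m, _, rfl⟩ := Finset.mem_image.1 hx
    rw [hB']
    exact locSurj_of_det lam _ _ (hloc _ (ha m m.2) _ (hBsub m m.2) (hBne m m.2))
  have hidx : ∀ (x : Fin N) (b : ℕ) (y : Fin s), b < s + 1 →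
      (x : ℕ) * s * (s + 1) + b * s + y < n * s ∧
      ((x : ℕ) * s * (s + 1) + b * s + y) / (s * (s + 1)) = x := by
    intro x b y hb
    have hy := y.2
    have h1 : b * s + y < s * (s + 1) := by
      have : b * s ≤ s * s := Nat.mul_le_mul_right _ (by omega)
      rw [mul_add]; omega
    constructor
    · have h2 : ((x : ℕ) + 1) * (s * (s + 1)) ≤ N * (s * (s + 1)) :=
        Nat.mul_le_mul_right _ x.2
      have h3 : n * s = N * (s * (s + 1)) := by rw [hN]; ring
      rw [h3]
      have h4 : ((x : ℕ) + 1) * (s * (s + 1)) = (x : ℕ) * s * (s + 1) + s * (s + 1) := by ring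
      omega
    · have h4 : (x : ℕ) * s * (s + 1) + b * s + y = (s * (s + 1)) * x + (b * s + y) := by ring
      rw [h4, Nat.mul_add_div (by positivity), Nat.div_eq_of_lt h1, add_zero]
  have hinj : Set.InjOn lam (Finset.range (n * s) : Finset ℕ) := by
    intro i hi j hj h
    exact hdist i (by simpa using hi) j (by simpa using hj) h
  let H : Fin N → Polynomial F := fun x =>
    Lagrange.interpolate (Finset.range (n * s)) lam
      (fun i => if i / (s * (s + 1)) = x then 1 else 0)
  have hHeval : ∀ (x' x : Fin N) (b : ℕ) (y : Fin s), b < s + 1 →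
      (H x').eval (muOf lam s x b y) = if (x : ℕ) = x' then 1 else 0 := by
    intro x' x b y hb
    obtain ⟨h1, h2⟩ := hidx x b y hb
    have := Lagrange.eval_interpolate_at_node
      (fun i => if i / (s * (s + 1)) = x' then (1 : F) else 0) hinj (Finset.mem_range.2 h1)
    rw [h2] at this
    exact this
  have hbS : ∀ x ∈ S, ∀ b ∈ B' x, b < s + 1 := by
    intro x hx b hb
    obtain ⟨m, _, rfl⟩ := Finset.mem_image.1 hx
    rw [hB'] at hb
    exact Finset.mem_range.1 (hBsub m m.2 hb)
  have hcore := core (muOf lam s) B' S hlocS H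
    (fun x hx b hb y => by rw [hHeval _ _ _ _ (hbS x hx b hb), if_pos rfl])
    (fun x hx x' hne b hb y => by
      rw [hHeval _ _ _ _ (hbS x hx b hb), if_neg (fun h => hne (Fin.ext h.symm))])
  rw [hS] at hcore
  -- column data
  let p : Fin (s ^ N * t) → ℕ × ℕ := fun κ => loc c (fun m => s ^ N * (B m).card) κ
  have hℓpos : 0 < s ^ N := by positivity
  have hp : ∀ κ, (p κ).1 < c ∧ (p κ).2 < s ^ N * (B (p κ).1).card ∧
      (κ : ℕ) = ∑ m ∈ Finset.range (p κ).1, s ^ N * (B m).card + (p κ).2 := by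
    intro κ
    refine loc_spec c (fun m => s ^ N * (B m).card) κ ?_
    rw [← Finset.mul_sum, hsum]
    exact κ.2
  have hq : ∀ κ, (p κ).2 / s ^ N < (B (p κ).1).card := fun κ =>
    Nat.div_lt_of_lt_mul (hp κ).2.1
  let dec : Fin (s ^ N * t) → Fin N × ℕ × (Fin N → Fin s) := fun κ =>
    (σ ⟨(p κ).1, (hp κ).1⟩, enum (B (p κ).1) ((p κ).2 / s ^ N),
      finFunctionFinEquiv.symm ⟨(p κ).2 % s ^ N, Nat.mod_lt _ hℓpos⟩)
  have hdec : Function.Injective dec := by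
    intro κ κ' h
    have h1 := hσ (congrArg Prod.fst h)
    have h1 : (p κ).1 = (p κ').1 := congrArg Fin.val h1
    have h2 : enum (B (p κ).1) ((p κ).2 / s ^ N) = enum (B (p κ').1) ((p κ').2 / s ^ N) :=
      congrArg (fun x => x.2.1) h
    have h3 : (p κ).2 % s ^ N = (p κ').2 % s ^ N :=
      congrArg Fin.val (finFunctionFinEquiv.symm.injective (congrArg (fun x => x.2.2) h))
    have h4 : (p κ).2 / s ^ N = (p κ').2 / s ^ N := by
      refine enum_inj (B (p κ).1) _ _ (hq κ) (h1 ▸ hq κ') ?_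
      rw [h2, h1]
    have h5 : (p κ).2 = (p κ').2 := by
      rw [← Nat.div_add_mod (p κ).2 (s ^ N), h3, h4, Nat.div_add_mod]
    apply Fin.ext
    rw [(hp κ).2.2, (hp κ').2.2, h1, h5]
  rw [← isUnit_iff_ne_zero, ← Matrix.isUnit_iff_isUnit_det,
    ← Matrix.vecMul_surjective_iff_isUnit]
  intro w
  obtain ⟨f, hf1, hf2⟩ := hcore (fun x b j => Function.extend dec w 0 (x, b, j))
  refine ⟨fun ρ => (f (finFunctionFinEquiv.symm ρ.divNat)).coeff ((ρ : ℕ) % t), ?_⟩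
  funext κ
  have hm : σ ⟨(p κ).1, (hp κ).1⟩ ∈ S := Finset.mem_image_of_mem _ (Finset.mem_univ _)
  have e1 := hf2 _ hm (enum (B (p κ).1) ((p κ).2 / s ^ N))
    (by rw [hB']; exact enum_mem _ _ (hq κ))
    (finFunctionFinEquiv.symm ⟨(p κ).2 % s ^ N, Nat.mod_lt _ hℓpos⟩)
  have e2 : Function.extend dec w 0 (dec κ) = w κ := hdec.extend_apply _ _ κ
  rw [← e2]
  refine Eq.trans ?_ e1
  rw [← sum_Aent lam t f hf1, Equiv.apply_symm_apply]
  rfl
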